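/- arXiv:1507.06763 — 2 statements merged into one kernel-verified Lean document; each statement's English description precedes it below -/
import Mathlib

section
/- Let X : I → ℝ^d be a database indexed by a finite set I, let i₀ ∈ I, and let X' be the restriction of X to I ∖ {i₀}. Then the set of outlier indices of X' equals the disjoint union (O(X) ∖ {i₀}) ∪ (CV(X, X i₀, k, r) ∖ {i₀}), where O(X) is the set of outlier indices of X; consequently q_count(X',k,r) = |O(X) ∖ {i₀}| + |CV(X, X i₀, k, r) ∖ {i₀}|. (Removing a record turns exactly the degree-k records within distance r of the removed record into new outliers.) -/
open Finset
open scoped Classical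

noncomputable section

/-- A point of `ℝ^d`. -/
abbrev Pt (d : ℕ) := EuclideanSpace ℝ (Fin d)

variable {I : Type*} [Fintype I] [DecidableEq I]

/-- The degree of record `i` in a database `X : I → ℝ^d`: the number of other records
within distance `r`. -/
def deg {d : ℕ} (X : I → Pt d) (r : ℝ) (i : I) : ℕ :=
  (univ.filter fun j => j ≠ i ∧ ‖X j - X i‖ ≤ r).card

/-- `O(X)`: the set of outlier indices, that is, records with fewer than `k` neighbors
within radius `r`. -/
def Oset {d : ℕ} (X : I → Pt d) (k : ℕ) (r : ℝ) : Finset I :=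
  univ.filter fun i => deg X r i < k

/-- `q_count(X,k,r) = |O(X)|`. -/
def qCount {d : ℕ} (X : I → Pt d) (k : ℕ) (r : ℝ) : ℕ :=
  (Oset X k r).card

/-- `CV(X,x,m,r)`: the set of degree-`m` record indices within distance `r` of `x`
(empty for `m < 0`). -/
def CV {d : ℕ} (X : I → Pt d) (x : Pt d) (m : ℤ) (r : ℝ) : Finset I :=
  univ.filter fun i => (deg X r i : ℤ) = m ∧ ‖X i - x‖ ≤ r

/-- Removing the record `i₀` lowers the degree of `i` by one if `i₀` lies within distance `r`
of it, and leaves it unchanged otherwise. -/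
theorem deg_eq_deg_restrict_add {d : ℕ} {I : Type*} [Fintype I] [DecidableEq I]
    (X : I → Pt d) (r : ℝ) (i₀ : I) (i : {i : I // i ≠ i₀}) :
    deg X r i = deg (fun j : {i : I // i ≠ i₀} => X j) r i
      + if ‖X i - X i₀‖ ≤ r then 1 else 0 := by
  have hcard : deg (fun j : {i : I // i ≠ i₀} => X j) r i
      = ((univ.filter fun j => j ≠ i.1 ∧ ‖X j - X i‖ ≤ r).erase i₀).card := by
    unfold deg
    rw [← card_map (Function.Embedding.subtype _)]
    congr 1
    ext j
    simp [Subtype.ext_iff]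
    tauto
  rw [hcard, card_erase_eq_ite]
  have hmem : i₀ ∈ (univ.filter fun j => j ≠ i.1 ∧ ‖X j - X i‖ ≤ r) ↔ ‖X i - X i₀‖ ≤ r := by
    simp [i.2.symm, norm_sub_rev (X i₀)]
  unfold deg
  split_ifs with h₁ h₂ h₂
  · have := card_pos.mpr ⟨i₀, h₁⟩
    convert (Nat.sub_add_cancel this).symm
  · exact absurd (hmem.mp h₁) h₂
  · exact absurd (hmem.mpr h₂) h₁
  · simp

/-- Removing the record `i₀` turns exactly the degree-`k` records within distance `r` of
the removed record into new outliers: the outlier set of the restricted database is the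
disjoint union `(O(X) ∖ {i₀}) ∪ (CV(X, X i₀, k, r) ∖ {i₀})`, and the counts add up. -/
theorem outliers_after_removal
    (d k : ℕ) (hd : 1 ≤ d) (hk : 1 ≤ k) (r : ℝ) (hr : 0 < r)
    (I : Type*) [Fintype I] [DecidableEq I] (X : I → Pt d) (i₀ : I) :
    ((Oset (fun j : {i : I // i ≠ i₀} => X j) k r).image Subtype.val
        = (Oset X k r \ {i₀}) ∪ (CV X (X i₀) (k : ℤ) r \ {i₀})) ∧
    Disjoint (Oset X k r \ {i₀}) (CV X (X i₀) (k : ℤ) r \ {i₀}) ∧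
    qCount (fun j : {i : I // i ≠ i₀} => X j) k r
        = (Oset X k r \ {i₀}).card + (CV X (X i₀) (k : ℤ) r \ {i₀}).card := by
  have himage : (Oset (fun j : {i : I // i ≠ i₀} => X j) k r).image Subtype.val
      = (Oset X k r \ {i₀}) ∪ (CV X (X i₀) (k : ℤ) r \ {i₀}) := by
    ext i
    by_cases hi : i = i₀
    · simp [hi]
    · have hdeg := deg_eq_deg_restrict_add X r i₀ ⟨i, hi⟩
      simp only [Oset, CV, mem_image, mem_filter, mem_univ, true_and, mem_union, mem_sdiff,
        mem_singleton, hi, not_false_eq_true, and_true, Subtype.exists, exists_and_right,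
        exists_eq_right, ne_eq, exists_true_left, Nat.cast_inj]
      dsimp only at hdeg
      split_ifs at hdeg with h <;> simp only [h] <;> grind
  have hdisj : Disjoint (Oset X k r \ {i₀}) (CV X (X i₀) (k : ℤ) r \ {i₀}) := by
    rw [disjoint_left]
    simp only [Oset, CV, mem_sdiff, mem_filter, mem_univ, true_and]
    omega
  refine ⟨himage, hdisj, ?_⟩
  rw [← card_union_of_disjoint hdisj, ← himage, card_image_of_injective _ Subtype.val_injective,
    qCount]
end
end

section
/- Let X : I → ℝ^d be a database indexed by a finite set I, let y ∈ ℝ^d, and let Y : I ∪ {∗} → ℝ^d be the database extending X with the new record Y(∗) = y. Then the set of outlier indices of Y lying in I equals O(X) ∖ CV(X, y, k−1, r), and consequently q_count(Y,k,r) = q_count(X,k,r) − |CV(X,y,k−1,r)| + (1 if deg(Y,r,∗) < k, else 0). (Adding a record turns exactly the degree-(k−1) outliers within distance r of the added record into inliers.) -/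
open Finset
open scoped Classical

noncomputable section

variable {I : Type*} [Fintype I] [DecidableEq I]

/-- Counting over `Option α` splits into the count over `α` and the contribution of `none`. -/
theorem card_filter_option {α : Type*} [Fintype α] (p : Option α → Prop) :
    (univ.filter p).card = (univ.filter fun a : α => p (some a)).card
      + (if p none then 1 else 0) := by
  simp only [card_filter, Fintype.sum_option]
  exact add_comm _ _

/-- Adding a record at `y` raises the degree of an old record by one exactly when it lies
within distance `r` of `y`. -/
theorem deg_option_some {α : Type*} [Fintype α] [DecidableEq α] {d : ℕ} (X : α → Pt d)
    (y : Pt d) (r : ℝ) (i : α) :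
    deg (fun o : Option α => o.elim y X) r (some i)
      = deg X r i + (if ‖X i - y‖ ≤ r then 1 else 0) := by
  unfold deg
  convert card_filter_option
    (fun j : Option α => j ≠ some i ∧ ‖j.elim y X - X i‖ ≤ r) using 2
  · ext j
    simp only [mem_filter]
    rfl
  · simp
  · simp [norm_sub_rev y]

/-- Adding a record at `y` turns exactly the degree-`(k−1)` outliers within distance `r`
of the added record into inliers: the outlier indices of the extended database `Y` lying
in `I` are `O(X) ∖ CV(X,y,k−1,r)`, and consequently
`q_count(Y,k,r) = q_count(X,k,r) − |CV(X,y,k−1,r)| + (1 if the new record is an outlier)`.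
Here `Y : Option I → ℝ^d` extends `X` with the new record `Y none = y`. -/
theorem outliers_after_addition
    (d k : ℕ) (hd : 1 ≤ d) (hk : 1 ≤ k) (r : ℝ) (hr : 0 < r)
    (I : Type*) [Fintype I] [DecidableEq I] (X : I → Pt d) (y : Pt d) :
    ((univ.filter fun i : I => some i ∈ Oset (fun o : Option I => o.elim y X) k r)
        = Oset X k r \ CV X y ((k : ℤ) - 1) r) ∧
    ((qCount (fun o : Option I => o.elim y X) k r : ℤ)
        = (qCount X k r : ℤ) - (CV X y ((k : ℤ) - 1) r).card
          + (if deg (fun o : Option I => o.elim y X) r none < k then 1 else 0)) := by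
  have outliers_eq :
      (univ.filter fun i : I => some i ∈ Oset (fun o : Option I => o.elim y X) k r)
        = Oset X k r \ CV X y ((k : ℤ) - 1) r := by
    ext i
    simp only [Oset, CV, mem_filter, mem_univ, true_and, mem_sdiff, deg_option_some]
    split_ifs with h <;> simp only [h, and_true, and_false, not_false_eq_true] <;> omega
  have CV_subset : CV X y ((k : ℤ) - 1) r ⊆ Oset X k r := by
    intro i hi
    simp only [Oset, CV, mem_filter, mem_univ, true_and] at hi ⊢
    omega
  refine ⟨outliers_eq, ?_⟩
  have card_eq : qCount (fun o : Option I => o.elim y X) k r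
      = (Oset X k r \ CV X y ((k : ℤ) - 1) r).card
        + (if deg (fun o : Option I => o.elim y X) r none < k then 1 else 0) := by
    rw [← outliers_eq]
    simp only [qCount, Oset, mem_filter, mem_univ, true_and]
    convert card_filter_option
      (fun o : Option I => deg (fun o : Option I => o.elim y X) r o < k)
  rw [card_eq, Nat.cast_add, cast_card_sdiff CV_subset]
  simp [qCount]
end
end
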